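/- arXiv:0911.0947 — 2 statements merged into one kernel-verified Lean document; each statement's English description precedes it below -/
import Mathlib

section
/- Let Ω ⊂ ℝⁿ be a bounded domain and let V₁, V₂ be potentials with V_i ∈ L¹_loc(Ω) ∩ L^∞_loc(closure(Ω) \ S_i), where S₁, S₂ are compact subsets of the closure of Ω with S₁ ∩ S₂ = ∅. Define λ₁(V) := inf{ ∫_Ω (|∇u|² − V u²) dx / ∫_Ω u² dx : u ∈ C₀^∞(Ω), u ≠ 0 }. If λ₁(V₁) > −∞ and λ₁(V₂) > −∞, then λ₁(V₁ + V₂) > −∞. -/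
/-!
The proof is the IMS localization formula. Since `S₁` and `S₂` are disjoint and closed, there is a
smooth angle `θ` vanishing near `S₁` and equal to `π / 2` near `S₂`. For a test function `u`, the
functions `cos θ * u` and `sin θ * u` are test functions, their squares add up to `u ^ 2`, and
`|∇(cos θ u)|² + |∇(sin θ u)|² = |∇u|² + u² |∇θ|²` (`sum_sq_gradient_cos_sin`), so that

`|∇u|² - (V₁ + V₂) u² = (|∇(cos θ u)|² - V₁ (cos θ u)²) + (|∇(sin θ u)|² - V₂ (sin θ u)²) - W u²`

with `W = |∇θ|² + V₁ sin² θ + V₂ cos² θ`. The hypotheses on `V₁` and `V₂` bound the integrals of the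
first two terms below by multiples of `∫ (cos θ u)²` and `∫ (sin θ u)²` (`exists_form_lower_bound`).
The function `W` is bounded above on `Ω`: on the closure of `Ω` away from a neighbourhood of `S₁`,
which is a compact set avoiding `S₁`, `V₁` is bounded, and near `S₁` the factor `sin² θ` vanishes;
symmetrically for `V₂` (`exists_bound_mul`).
-/

open MeasureTheory Metric Set Real Filter

noncomputable section

/-- Euclidean space `ℝⁿ`. -/
abbrev Euc (n : ℕ) := EuclideanSpace ℝ (Fin n)

/-- Smooth functions compactly supported in `Ω`. -/
def IsTest {n : ℕ} (Ω : Set (Euc n)) (u : Euc n → ℝ) : Prop :=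
  ContDiff ℝ (⊤ : ℕ∞) u ∧ HasCompactSupport u ∧ tsupport u ⊆ Ω

/-- `S` is a boundaryless `C²` submanifold of `ℝⁿ` of codimension `k`, described locally
as a regular level set of a `C²` submersion. -/
def IsC2Submanifold {n : ℕ} (k : ℕ) (S : Set (Euc n)) : Prop :=
  ∀ p ∈ S, ∃ (U : Set (Euc n)) (f : Euc n → EuclideanSpace ℝ (Fin k)),
    IsOpen U ∧ p ∈ U ∧ ContDiff ℝ 2 f ∧
    (∀ x ∈ U, Function.Surjective (fderiv ℝ f x)) ∧
    S ∩ U = {x ∈ U | f x = 0}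
/-- The set of Rayleigh quotients `∫_Ω (|∇u|² - V u²) / ∫_Ω u²` of the Schrödinger
operator `-Δ - V` over nonzero test functions.  `λ₁(V) > -∞` means this set is
bounded below. -/
def RayleighLap {n : ℕ} (Ω : Set (Euc n)) (V : Euc n → ℝ) : Set ℝ :=
  { r : ℝ | ∃ u, IsTest Ω u ∧ (∫ x in Ω, (u x) ^ 2) ≠ 0 ∧
      r = (∫ x in Ω, ((∑ i, (gradient u x i) ^ 2) - V x * (u x) ^ 2))
            / ∫ x in Ω, (u x) ^ 2 }

lemma gradient_apply_eq {n : ℕ} (f : Euc n → ℝ) (x : Euc n) (i : Fin n) :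
    gradient f x i = fderiv ℝ f x (EuclideanSpace.single i 1) := by
  have h := inner_gradient_left (𝕜 := ℝ) (f := f) (x := x) (y := EuclideanSpace.single i (1 : ℝ))
  rw [← h, EuclideanSpace.inner_single_right]
  simp

/-- The IMS localization formula for the quadratic partition of unity `cos² θ + sin² θ = 1`. -/
lemma sum_sq_gradient_cos_sin {n : ℕ} {θ u : Euc n → ℝ} {x : Euc n}
    (hθ : DifferentiableAt ℝ θ x) (hu : DifferentiableAt ℝ u x) :
    (∑ i, (gradient (fun y => cos (θ y) * u y) x i) ^ 2)
      + (∑ i, (gradient (fun y => sin (θ y) * u y) x i) ^ 2)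
      = (∑ i, (gradient u x i) ^ 2) + (∑ i, (gradient θ x i) ^ 2) * (u x) ^ 2 := by
  rw [Finset.sum_mul, ← Finset.sum_add_distrib, ← Finset.sum_add_distrib]
  refine Finset.sum_congr rfl fun i _ => ?_
  simp only [gradient_apply_eq]
  have h1 := (hθ.hasFDerivAt.cos.mul hu.hasFDerivAt).fderiv
  have h2 := (hθ.hasFDerivAt.sin.mul hu.hasFDerivAt).fderiv
  simp only [Pi.mul_def] at h1 h2
  rw [h1, h2]
  simp only [add_apply, smul_apply, smul_eq_mul]
  have := sin_sq_add_cos_sq (θ x)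
  linear_combination ((fderiv ℝ u x (EuclideanSpace.single i 1)) ^ 2
    + (fderiv ℝ θ x (EuclideanSpace.single i 1)) ^ 2 * (u x) ^ 2) * this

lemma continuous_sum_sq_gradient {n : ℕ} {f : Euc n → ℝ} (hf : ContDiff ℝ (⊤ : ℕ∞) f) :
    Continuous fun x => ∑ i, (gradient f x i) ^ 2 := by
  simp only [gradient_apply_eq]
  have := hf.continuous_fderiv (by simp)
  fun_prop

lemma IsTest.mul_left {n : ℕ} {Ω : Set (Euc n)} {η u : Euc n → ℝ} (hu : IsTest Ω u)
    (hη : ContDiff ℝ (⊤ : ℕ∞) η) : IsTest Ω (fun x => η x * u x) :=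
  ⟨hη.mul hu.1, hu.2.1.mul_left, (tsupport_mul_subset_right (f := η) (g := u)).trans hu.2.2⟩

lemma IsTest.hasCompactSupport_sq {n : ℕ} {Ω : Set (Euc n)} {u : Euc n → ℝ} (hu : IsTest Ω u) :
    HasCompactSupport (fun x => (u x) ^ 2) := by
  refine hu.2.1.mono fun x hx h0 => hx ?_
  simp [h0]

lemma IsTest.integrable_sq {n : ℕ} {Ω : Set (Euc n)} {u : Euc n → ℝ} (hu : IsTest Ω u) :
    Integrable (fun x => (u x) ^ 2) :=
  (hu.1.continuous.pow 2).integrable_of_hasCompactSupport hu.hasCompactSupport_sq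

lemma IsTest.integrable_form {n : ℕ} {Ω : Set (Euc n)} {u V : Euc n → ℝ} (hu : IsTest Ω u)
    (hV : LocallyIntegrableOn V Ω volume) :
    Integrable (fun x => (∑ i, (gradient u x i) ^ 2) - V x * (u x) ^ 2) := by
  refine Integrable.sub ?_ ?_
  · refine (continuous_sum_sq_gradient hu.1).integrable_of_hasCompactSupport ?_
    simp only [gradient_apply_eq]
    exact (hu.2.1.fderiv ℝ).comp_left
      (g := fun L : Euc n →L[ℝ] ℝ => ∑ i, (L (EuclideanSpace.single i 1)) ^ 2) (by simp)
  · have h := (hV.integrableOn_compact_subset hu.2.2 hu.2.1).mul_continuousOn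
      (hu.1.continuous.pow 2).continuousOn hu.2.1
    refine (integrableOn_iff_integrable_of_support_subset ?_).1 h
    refine fun x hx => subset_tsupport u fun h0 => hx ?_
    simp [h0]

/-- A lower bound for the Rayleigh quotients bounds the quadratic form itself, also on the zero
test function. -/
lemma exists_form_lower_bound {n : ℕ} {Ω : Set (Euc n)} {V : Euc n → ℝ}
    (h : BddBelow (RayleighLap Ω V)) : ∃ m : ℝ, ∀ u, IsTest Ω u →
      m * (∫ x in Ω, (u x) ^ 2) ≤ ∫ x in Ω, ((∑ i, (gradient u x i) ^ 2) - V x * (u x) ^ 2) := by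
  obtain ⟨m, hm⟩ := h
  refine ⟨m, fun u hu => ?_⟩
  by_cases h0 : (∫ x in Ω, (u x) ^ 2) = 0
  · have hz : u = 0 := by
      by_contra hne
      obtain ⟨x, hx⟩ := Function.ne_iff.1 hne
      have hpos := (hu.1.continuous.pow 2).integral_pos_of_hasCompactSupport_nonneg_nonzero
        (μ := volume) (x := x) hu.hasCompactSupport_sq
        (fun y => sq_nonneg (u y)) (pow_ne_zero 2 hx)
      have hset : (∫ x in Ω, (u x) ^ 2) = ∫ x, (u x) ^ 2 := by
        refine setIntegral_eq_integral_of_forall_compl_eq_zero fun y hy => ?_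
        rw [image_eq_zero_of_notMem_tsupport fun hy' => hy (hu.2.2 hy')]
        simp
      exact hpos.ne' (hset ▸ h0)
    subst hz
    simp [gradient_apply_eq]
  · have hpos : 0 < ∫ x in Ω, (u x) ^ 2 :=
      lt_of_le_of_ne (integral_nonneg fun x => sq_nonneg (u x)) (Ne.symm h0)
    have := hm ⟨u, hu, h0, rfl⟩
    rwa [le_div_iff₀ hpos] at this

/-- A potential that is locally bounded on the closure of `Ω` off `S` becomes bounded above on `Ω`
after multiplication by a function with values in `[0, 1]` that vanishes near `S`. -/
lemma exists_bound_mul {n : ℕ} {Ω S : Set (Euc n)} (hbd : Bornology.IsBounded Ω)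
    {V η : Euc n → ℝ}
    (hV : ∀ x ∈ closure Ω \ S, ∃ U ∈ nhds x, ∃ C : ℝ, ∀ y ∈ U ∩ closure Ω, |V y| ≤ C)
    (h0 : ∀ x, 0 ≤ η x) (h1 : ∀ x, η x ≤ 1) (hη : ∀ᶠ x in nhdsSet S, η x = 0) :
    ∃ C : ℝ, ∀ x ∈ Ω, V x * η x ≤ C := by
  obtain ⟨O, hO, hSO, hOη⟩ := mem_nhdsSet_iff_exists.1 hη
  have hK : IsCompact (closure Ω \ O) := hbd.isCompact_closure.diff hO
  obtain ⟨C, hC⟩ : ∃ C : ℝ, ∀ y ∈ closure Ω \ O, |V y| ≤ C := by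
    refine hK.induction_on (p := fun s => ∃ C : ℝ, ∀ y ∈ s, |V y| ≤ C) ⟨0, by simp⟩ ?_ ?_ ?_
    · rintro s t hst ⟨C, hC⟩
      exact ⟨C, fun y hy => hC y (hst hy)⟩
    · rintro s t ⟨C, hC⟩ ⟨D, hD⟩
      exact ⟨max C D, fun y hy => hy.elim (fun h => (hC y h).trans (le_max_left _ _))
        fun h => (hD y h).trans (le_max_right _ _)⟩
    · intro x hx
      obtain ⟨U, hU, C, hC⟩ := hV x ⟨hx.1, fun h => hx.2 (hSO h)⟩
      exact ⟨U ∩ (closure Ω \ O), inter_mem (mem_nhdsWithin_of_mem_nhds hU) self_mem_nhdsWithin,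
        C, fun y hy => hC y ⟨hy.1, hy.2.1⟩⟩
  refine ⟨max C 0, fun x hx => ?_⟩
  by_cases hxO : x ∈ O
  · have : η x = 0 := hOη hxO
    simp [this]
  · calc V x * η x ≤ |V x| * 1 :=
          mul_le_mul (le_abs_self _) (h1 x) (h0 x) (abs_nonneg _)
      _ ≤ max C 0 := by
          rw [mul_one]
          exact (hC x ⟨subset_closure hx, hxO⟩).trans (le_max_left _ _)

open scoped Manifold ContDiff in
lemma exists_angle {n : ℕ} {S₁ S₂ : Set (Euc n)} (hS₁ : IsClosed S₁) (hS₂ : IsClosed S₂)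
    (hdisj : Disjoint S₁ S₂) :
    ∃ θ : Euc n → ℝ, ContDiff ℝ (⊤ : ℕ∞) θ ∧ (∀ᶠ x in nhdsSet S₁, θ x = 0) ∧
      ∀ᶠ x in nhdsSet S₂, θ x = π / 2 := by
  obtain ⟨f, hf0, hf1, -⟩ := exists_contMDiffMap_zero_one_nhds_of_isClosed
    (n := ⊤) (𝓘(ℝ, Euc n)) hS₁ hS₂ hdisj
  refine ⟨fun x => π / 2 * f x, contDiff_const.mul f.contMDiff.contDiff, ?_, ?_⟩
  · filter_upwards [hf0] with x hx
    simp [hx]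
  · filter_upwards [hf1] with x hx
    simp [hx]

/-- **Finiteness of the generalized first eigenvalue for sums of potentials with
disjoint singular sets** (Lemma 4.1).  Let `Ω ⊂ ℝⁿ` be a bounded domain and `V₁, V₂`
potentials with `V_i ∈ L¹_loc(Ω) ∩ L^∞_loc(closure Ω \ S_i)`, where `S₁, S₂` are
disjoint compact subsets of `closure Ω`.  If `λ₁(V₁) > -∞` and `λ₁(V₂) > -∞`, then
`λ₁(V₁ + V₂) > -∞`. -/
theorem sum_of_potentials_bounded_below
    {n : ℕ} (Ω : Set (Euc n))
    (hΩo : IsOpen Ω) (hne : Ω.Nonempty) (hconn : IsConnected Ω)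
    (hbd : Bornology.IsBounded Ω)
    (V₁ V₂ : Euc n → ℝ) (S₁ S₂ : Set (Euc n))
    (hS₁ : IsCompact S₁) (hS₂ : IsCompact S₂)
    (hS₁c : S₁ ⊆ closure Ω) (hS₂c : S₂ ⊆ closure Ω)
    (hdisj : Disjoint S₁ S₂)
    (hV₁loc : LocallyIntegrableOn V₁ Ω volume)
    (hV₂loc : LocallyIntegrableOn V₂ Ω volume)
    (hV₁b : ∀ x ∈ closure Ω \ S₁, ∃ U ∈ nhds x, ∃ C : ℝ,
      ∀ y ∈ U ∩ closure Ω, |V₁ y| ≤ C)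
    (hV₂b : ∀ x ∈ closure Ω \ S₂, ∃ U ∈ nhds x, ∃ C : ℝ,
      ∀ y ∈ U ∩ closure Ω, |V₂ y| ≤ C)
    (h₁ : BddBelow (RayleighLap Ω V₁)) (h₂ : BddBelow (RayleighLap Ω V₂)) :
    BddBelow (RayleighLap Ω (fun x => V₁ x + V₂ x)) := by
  obtain ⟨θ, hθ, hθ₁, hθ₂⟩ := exists_angle hS₁.isClosed hS₂.isClosed hdisj
  obtain ⟨m₁, hm₁⟩ := exists_form_lower_bound h₁
  obtain ⟨m₂, hm₂⟩ := exists_form_lower_bound h₂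
  obtain ⟨C₁, hC₁⟩ := exists_bound_mul (η := fun x => sin (θ x) ^ 2) hbd hV₁b
    (fun x => sq_nonneg _) (fun x => sin_sq_le_one _) (by
      filter_upwards [hθ₁] with x hx
      simp [hx])
  obtain ⟨C₂, hC₂⟩ := exists_bound_mul (η := fun x => cos (θ x) ^ 2) hbd hV₂b
    (fun x => sq_nonneg _) (fun x => cos_sq_le_one _) (by
      filter_upwards [hθ₂] with x hx
      simp [hx])
  obtain ⟨C₃, hC₃⟩ := hbd.isCompact_closure.exists_bound_of_continuousOn
    (continuous_sum_sq_gradient hθ).continuousOn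
  refine ⟨min m₁ m₂ - (C₁ + C₂ + C₃), ?_⟩
  rintro r ⟨u, hu, hu0, rfl⟩
  have hpos : 0 < ∫ x in Ω, (u x) ^ 2 :=
    lt_of_le_of_ne (integral_nonneg fun x => sq_nonneg (u x)) (Ne.symm hu0)
  rw [le_div_iff₀ hpos]
  have hc : IsTest Ω (fun x => cos (θ x) * u x) := hu.mul_left hθ.cos
  have hs : IsTest Ω (fun x => sin (θ x) * u x) := hu.mul_left hθ.sin
  have hcI := (hc.integrable_form hV₁loc).integrableOn (s := Ω)
  have hsI := (hs.integrable_form hV₂loc).integrableOn (s := Ω)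
  have huI := hu.integrable_sq.integrableOn (s := Ω)
  have hmass : (∫ x in Ω, (cos (θ x) * u x) ^ 2) + (∫ x in Ω, (sin (θ x) * u x) ^ 2)
      = ∫ x in Ω, (u x) ^ 2 := by
    rw [← integral_add hc.integrable_sq.integrableOn hs.integrable_sq.integrableOn]
    refine integral_congr_ae (Eventually.of_forall fun x => ?_)
    linear_combination (u x) ^ 2 * sin_sq_add_cos_sq (θ x)
  have hmono := setIntegral_mono_on ((hcI.add hsI).sub (huI.const_mul (C₁ + C₂ + C₃)))
    ((hu.integrable_form (hV₁loc.add hV₂loc)).integrableOn (s := Ω)) hΩo.measurableSet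
    (fun x hx => by
      have hims := sum_sq_gradient_cos_sin (hθ.differentiable (by simp) x)
        (hu.1.differentiable (by simp) x)
      have hW : (∑ i, (gradient θ x i) ^ 2) + V₁ x * sin (θ x) ^ 2 + V₂ x * cos (θ x) ^ 2
          ≤ C₁ + C₂ + C₃ := by
        have e1 := hC₁ x hx
        have e2 := hC₂ x hx
        have e3 := (le_abs_self _).trans (hC₃ x (subset_closure hx))
        linarith
      have hWu := mul_le_mul_of_nonneg_right hW (sq_nonneg (u x))
      have hsc := sin_sq_add_cos_sq (θ x)
      simp only [Pi.add_apply, Pi.sub_apply]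
      have key : V₁ x * (cos (θ x) * u x) ^ 2 + V₂ x * (sin (θ x) * u x) ^ 2
          = (V₁ x + V₂ x) * u x ^ 2
            - (V₁ x * sin (θ x) ^ 2 + V₂ x * cos (θ x) ^ 2) * u x ^ 2 := by
        linear_combination (V₁ x + V₂ x) * u x ^ 2 * hsc
      linarith)
  rw [integral_sub' (hcI.add hsI) (huI.const_mul _), integral_add' hcI hsI,
    integral_const_mul] at hmono
  have b1 := (mul_le_mul_of_nonneg_right (min_le_left m₁ m₂)
    (integral_nonneg fun x => sq_nonneg (cos (θ x) * u x))).trans (hm₁ _ hc)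
  have b2 := (mul_le_mul_of_nonneg_right (min_le_right m₁ m₂)
    (integral_nonneg fun x => sq_nonneg (sin (θ x) * u x))).trans (hm₂ _ hs)
  rw [sub_mul, ← hmass, mul_add]
  rw [← hmass] at hmono
  simp only [Pi.add_apply] at hmono
  linarith
end
end

section
/- Let Ω ⊂ ℝⁿ, n ≥ 2, be a smooth bounded domain with boundary of codimension one, and let d(x) = dist(x, ∂Ω). Then there exists δ₀ > 0 small such that for every 0 < δ ≤ δ₀ and every u ∈ C₀^∞(Ω_δ), where Ω_δ := {x ∈ Ω : d(x) < δ}, the improved Hardy inequality holds: ∫_{Ω_δ} ( |∇u|² − u²/(4 d²) ) dx ≥ (1/8) ∫_{Ω_δ} (X(d)²/d²) u² dx, where X(t) := (1 − ln t)^{−1}. -/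
/-!
The function `φ = g ∘ d`, with `g(t) = √(t (1 - log t))`, is a positive supersolution of
`-Δφ = (1/(4 d²) + X(d)²/(8 d²)) φ` near the boundary, since `-g''/g = (1 + X²)/(4 t²)`,
`0 ≤ g'/g ≤ 1/(2 t)`, and the slack `X²/(8 t²)` absorbs the curvature contribution `O(1/t)` of
`Δd`. Picone's inequality then gives the claim.

Only an upper bound on `Δd` is used, so neither the `C²` regularity nor even the differentiability
of `d` is required: by `exists_touching_sphere`, the `C²` hypersurface has tangent balls of a
uniform radius `R` on the far side, so `d` is touched from above at each point by a smooth function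
`‖· - z‖ - R`, whose Hessian is at most `1/R`. The supersolution inequality is therefore proved for
second differences (`discrete_supersolution`), where touching from above transfers directly, and
combined with a discrete Picone inequality (`integral_picone`). Letting the step of the difference
quotients tend to zero, which involves only the smooth function `u`, yields the inequality
(`hardy_of_discrete_supersolution`).
-/

open MeasureTheory Metric Set Real Filter

noncomputable section

/-! ### Uniform touching spheres for a C² hypersurface -/

/-- `S` has uniformly bounded curvature at its points in `T`: within distance `r` of each
`y ∈ S ∩ T` it is the zero set of a continuous function `F` agreeing with the linear function
`⟪ν, · - y⟫`, `‖ν‖ = 1`, up to `C ‖· - y‖²`. -/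
def UniformlyFlat {n : ℕ} (S T : Set (Euc n)) (r C : ℝ) : Prop :=
  ∀ y ∈ T, y ∈ S → ∃ (F : Euc n → ℝ) (ν : Euc n), ‖ν‖ = 1 ∧ Continuous F ∧
    (∀ q ∈ ball y r, (q ∈ S ↔ F q = 0)) ∧
    ∀ q ∈ ball y r, |F q - inner ℝ ν (q - y)| ≤ C * ‖q - y‖ ^ 2

lemma UniformlyFlat.weaken {n : ℕ} {S T : Set (Euc n)} {r r' C C' : ℝ}
    (h : UniformlyFlat S T r C) (hr : r' ≤ r) (hC : C ≤ C') : UniformlyFlat S T r' C' := by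
  intro y hyT hyS
  obtain ⟨F, ν, h1, h2, h3, h4⟩ := h y hyT hyS
  refine ⟨F, ν, h1, h2, fun q hq => h3 q (ball_subset_ball hr hq), fun q hq => ?_⟩
  exact (h4 q (ball_subset_ball hr hq)).trans (by gcongr)

/-- Near each point of a `C²` hypersurface, a local defining function divided by the norm of its
gradient at the base point witnesses flatness, because its derivative is locally Lipschitz. -/
lemma exists_uniformlyFlat_nhds {n : ℕ} {S : Set (Euc n)} (hS : IsC2Submanifold 1 S)
    {p : Euc n} (hp : p ∈ S) :
    ∃ T ∈ nhds p, ∃ r > 0, ∃ C > 0, UniformlyFlat S T r C := by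
  obtain ⟨U, f, hU, hpU, hf, hsurj, hSU⟩ := hS p hp
  set f₀ : Euc n → ℝ := fun x => f x 0 with hf₀
  have hf₀C : ContDiff ℝ 2 f₀ := by
    have := (EuclideanSpace.proj (𝕜 := ℝ) (0 : Fin 1)).contDiff.comp hf (n := 2)
    exact this
  have hdiff : Differentiable ℝ f₀ := hf₀C.differentiable (by norm_num)
  have hf₀zero : ∀ x, f x = 0 ↔ f₀ x = 0 := by
    intro x
    constructor
    · intro h; simp [hf₀, h]
    · intro h; ext i; fin_cases i; simpa [hf₀] using h
  have hD1 : ContDiff ℝ 1 (fderiv ℝ f₀) := hf₀C.fderiv_right (by norm_num)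
  have hne : fderiv ℝ f₀ p ≠ 0 := by
    intro h0
    obtain ⟨v, hv⟩ := hsurj p hpU (EuclideanSpace.single 0 1)
    have hfd : HasFDerivAt f₀ ((EuclideanSpace.proj (𝕜 := ℝ) (0 : Fin 1)).comp (fderiv ℝ f p)) p :=
      (EuclideanSpace.proj (𝕜 := ℝ) (0 : Fin 1)).hasFDerivAt.comp p
        ((hf.differentiable (by norm_num)) p).hasFDerivAt
    rw [hfd.fderiv] at h0
    have := congrArg (fun L => L v) h0
    simp [hv] at this
  obtain ⟨L, t, ht, hL⟩ := hD1.contDiffAt (x := p) |>.exists_lipschitzOnWith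
  set c : ℝ := ‖fderiv ℝ f₀ p‖ / 2 with hc
  have hc0 : 0 < c := by have := norm_pos_iff.2 hne; positivity
  have hcn : ∀ᶠ x in nhds p, c < ‖fderiv ℝ f₀ x‖ := by
    apply (hD1.continuous.norm.tendsto p).eventually_const_lt
    have := norm_pos_iff.2 hne
    rw [hc]; linarith
  obtain ⟨ρ, hρ, hball⟩ := Metric.mem_nhds_iff.1
    (Filter.inter_mem (Filter.inter_mem ht (hU.mem_nhds hpU)) hcn)
  refine ⟨ball p (ρ / 2), ball_mem_nhds _ (by positivity), ρ / 2, by positivity,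
    (L + 1) / c, by positivity, ?_⟩
  intro y hy hyS
  have hsub : ball y (ρ / 2) ⊆ ball p ρ := by
    intro q hq
    rw [mem_ball] at *
    linarith [dist_triangle q y p]
  have hyb : y ∈ ball y (ρ / 2) := mem_ball_self (by positivity)
  have hmem : ∀ q ∈ ball y (ρ / 2), q ∈ t ∧ q ∈ U ∧ c < ‖fderiv ℝ f₀ q‖ := by
    intro q hq
    obtain ⟨⟨h1, h2⟩, h3⟩ := hball (hsub hq)
    exact ⟨h1, h2, h3⟩
  have hg := (hmem y hyb).2.2
  have hzero : ∀ q ∈ ball y (ρ / 2), (q ∈ S ↔ f₀ q = 0) := by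
    intro q hq
    have hqU := (hmem q hq).2.1
    rw [← hf₀zero]
    have := Set.ext_iff.1 hSU q
    simpa [hqU] using this
  set N := ‖fderiv ℝ f₀ y‖ with hN
  have hN0 : 0 < N := hc0.trans hg
  refine ⟨fun q => N⁻¹ * f₀ q, N⁻¹ • gradient f₀ y, ?_, by have := hf₀C.continuous; fun_prop, ?_, ?_⟩
  · rw [norm_smul, gradient, LinearIsometryEquiv.norm_map, norm_inv, Real.norm_of_nonneg hN0.le]
    exact inv_mul_cancel₀ hN0.ne'
  · intro q hq
    rw [hzero q hq]
    simp [hN0.ne']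
  · intro q hq
    have hfy : f₀ y = 0 := (hzero y hyb).1 hyS
    rw [inner_smul_left, inner_gradient_left]
    have hconv : Convex ℝ (segment ℝ y q) := convex_segment y q
    have hseg : segment ℝ y q ⊆ ball y (ρ / 2) := (convex_ball y (ρ/2)).segment_subset hyb hq
    have key := Convex.norm_image_sub_le_of_norm_fderiv_le' (𝕜 := ℝ) (f := f₀)
      (s := segment ℝ y q) (φ := fderiv ℝ f₀ y) (C := L * ‖q - y‖) (x := y) (y := q)
      (fun x _ => hdiff x) (by
        intro x hx
        have h1 := hL.dist_le_mul x (hmem x (hseg hx)).1 y (hmem y hyb).1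
        rw [dist_eq_norm] at h1
        refine h1.trans ?_
        gcongr
        have := dist_add_dist_of_mem_segment hx
        rw [← dist_eq_norm, dist_comm q y, dist_comm x y]
        linarith [dist_nonneg (x := x) (y := q)]) hconv (left_mem_segment ℝ y q)
        (right_mem_segment ℝ y q)
    rw [hfy, sub_zero, Real.norm_eq_abs] at key
    have e : N⁻¹ * f₀ q - (starRingEnd ℝ) N⁻¹ * (fderiv ℝ f₀ y) (q - y)
        = N⁻¹ * (f₀ q - fderiv ℝ f₀ y (q - y)) := by simp; ring
    rw [e, abs_mul, abs_of_pos (inv_pos.2 hN0)]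
    calc N⁻¹ * |f₀ q - fderiv ℝ f₀ y (q - y)| ≤ c⁻¹ * (L * ‖q - y‖ * ‖q - y‖) := by
          gcongr
      _ ≤ c⁻¹ * ((L + 1) * ‖q - y‖ * ‖q - y‖) := by gcongr; linarith
      _ = _ := by ring

lemma exists_uniformlyFlat {n : ℕ} {S : Set (Euc n)} (hS : IsC2Submanifold 1 S)
    (hSc : IsCompact S) : ∃ r > 0, ∃ C > 0, UniformlyFlat S S r C := by
  refine hSc.induction_on (p := fun T => ∃ r > 0, ∃ C > 0, UniformlyFlat S T r C) ?_ ?_ ?_ ?_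
  · exact ⟨1, one_pos, 1, one_pos, fun y hy => absurd hy (notMem_empty y)⟩
  · rintro s t hst ⟨r, hr, C, hC, h⟩
    exact ⟨r, hr, C, hC, fun y hy => h y (hst hy)⟩
  · rintro s t ⟨r, hr, C, hC, h⟩ ⟨r', hr', C', hC', h'⟩
    refine ⟨min r r', lt_min hr hr', max C C', lt_max_of_lt_left hC, ?_⟩
    rintro y (hy | hy)
    · exact (h.weaken (min_le_left _ _) (le_max_left _ _)) y hy
    · exact (h'.weaken (min_le_right _ _) (le_max_right _ _)) y hy
  · intro p hp
    obtain ⟨T, hT, h⟩ := exists_uniformlyFlat_nhds hS hp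
    exact ⟨T, mem_nhdsWithin_of_mem_nhds hT, h⟩

/-- Uniform touching spheres: `d = infDist · S` is touched from above at `x`, on the ball
`B(x, d x)`, by the smooth function `‖· - z‖ - R`. The point `z` is the centre of a ball of radius
`R` tangent to `S` at the point nearest to `x`, on the other side of `S`. -/
lemma exists_touching_sphere {n : ℕ} {S : Set (Euc n)} (hS : IsC2Submanifold 1 S)
    (hSc : IsCompact S) (hSne : S.Nonempty) :
    ∃ R > 0, ∃ δ > 0, ∀ x, 0 < infDist x S → infDist x S < δ →
      ∃ z, ‖x - z‖ = infDist x S + R ∧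
        ∀ x', dist x' x < infDist x S → infDist x' S ≤ ‖x' - z‖ - R := by
  obtain ⟨r, hr, C, hC, hflat⟩ := exists_uniformlyFlat hS hSc
  obtain ⟨R, hR0, hRr, hRC⟩ : ∃ R > 0, 2 * R ≤ r ∧ C * (2 * R) < 1 := by
    refine ⟨min (r / 2) (1 / (4 * C)), by positivity, ?_, ?_⟩
    · linarith [min_le_left (r / 2) (1 / (4 * C))]
    · have h1 := min_le_right (r / 2) (1 / (4 * C))
      calc C * (2 * min (r / 2) (1 / (4 * C))) ≤ C * (2 * (1 / (4 * C))) := by gcongr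
        _ < 1 := by field_simp; norm_num
  refine ⟨R, hR0, r / 2, by positivity, ?_⟩
  intro x hd0 hdr
  obtain ⟨y, hyS, hdy⟩ := hSc.exists_infDist_eq_dist hSne x
  set d := infDist x S with hd
  have hfree : ∀ q ∈ ball x d, q ∉ S := by
    intro q hq hqS
    have := infDist_le_dist_of_mem (x := x) hqS
    rw [mem_ball, dist_comm] at hq
    linarith
  have hsub : ball x d ⊆ ball y r := by
    intro q hq
    rw [mem_ball] at *
    linarith [dist_triangle q x y]
  have hxb : x ∈ ball x d := mem_ball_self hd0
  -- Replacing `(F, ν)` by `(-F, -ν)` if necessary, `F` is positive at `x`.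
  obtain ⟨F, ν, hν, hFc, hFz, hFe, hFx⟩ : ∃ (F : Euc n → ℝ) (ν : Euc n), ‖ν‖ = 1 ∧ Continuous F ∧
      (∀ q ∈ ball y r, (q ∈ S ↔ F q = 0)) ∧
      (∀ q ∈ ball y r, |F q - inner ℝ ν (q - y)| ≤ C * ‖q - y‖ ^ 2) ∧ 0 < F x := by
    obtain ⟨F, ν, hν, hFc, hFz, hFe⟩ := hflat y hyS hyS
    have hx0 : F x ≠ 0 := fun h => hfree x hxb ((hFz x (hsub hxb)).2 h)
    rcases lt_or_gt_of_ne hx0 with h | h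
    · refine ⟨fun q => -F q, -ν, by simpa using hν, hFc.neg, by simpa using hFz, ?_, by linarith⟩
      intro q hq
      rw [inner_neg_left, ← abs_neg]
      convert hFe q hq using 2
      ring
    · exact ⟨F, ν, hν, hFc, hFz, hFe, h⟩
  have hFpos : ∀ q ∈ ball x d, 0 < F q := by
    intro q hq
    by_contra hle
    push Not at hle
    obtain ⟨p, hp, hFp⟩ := (convex_ball x d).isPreconnected.intermediate_value hq hxb
      hFc.continuousOn ⟨hle, hFx.le⟩
    exact hfree p hp ((hFz p (hsub hp)).2 hFp)
  -- The unit vector from `y` to `x` is the normal `ν`: otherwise `y + s (e - ν)` lies in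
  -- `B(x, d)` for small `s > 0`, while `F` is negative there.
  have hxyn : ‖x - y‖ = d := by rw [hdy, dist_eq_norm]
  have hxy : x - y = d • ν := by
    set e := d⁻¹ • (x - y) with he
    have he1 : ‖e‖ = 1 := by
      rw [he, norm_smul, hxyn, norm_inv, Real.norm_of_nonneg hd0.le, inv_mul_cancel₀ hd0.ne']
    have hxe : x - y = d • e := by rw [he, smul_smul, mul_inv_cancel₀ hd0.ne', one_smul]
    suffices e = ν by rw [hxe, this]
    by_contra hne
    set κ := inner ℝ e ν with hκ
    have hκ1 : κ < 1 := by
      have h1 : κ ≤ 1 := by simpa [he1, hν] using real_inner_le_norm e ν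
      exact lt_of_le_of_ne h1 fun h => hne ((inner_eq_one_iff_of_norm_eq_one he1 hν).1 h)
    set w := e - ν with hw
    have hwn : ‖w‖ ^ 2 = 2 * (1 - κ) := by
      rw [hw, norm_sub_sq_real, he1, hν]; ring
    have hwe : inner ℝ w e = 1 - κ := by
      rw [hw, inner_sub_left, real_inner_self_eq_norm_sq, he1, real_inner_comm]; ring
    have hwν : inner ℝ ν w = κ - 1 := by
      rw [hw, inner_sub_right, real_inner_self_eq_norm_sq, hν, real_inner_comm]; ring
    obtain ⟨s, hs0, hs1, hs2⟩ : ∃ s : ℝ, 0 < s ∧ s < d ∧ C * (2 * s) < 1 := by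
      refine ⟨min (d / 2) (1 / (4 * C)), by positivity, ?_, ?_⟩
      · linarith [min_le_left (d / 2) (1 / (4 * C))]
      · calc C * (2 * min (d / 2) (1 / (4 * C))) ≤ C * (2 * (1 / (4 * C))) := by
              gcongr; exact min_le_right _ _
          _ < 1 := by field_simp; norm_num
    have hq : y + s • w ∈ ball x d := by
      rw [mem_ball, dist_eq_norm]
      have e1 : y + s • w - x = s • w - d • e := by rw [← hxe]; abel
      have e2 : ‖y + s • w - x‖ ^ 2 = s ^ 2 * (2 * (1 - κ)) - 2 * (s * (d * (1 - κ))) + d ^ 2 := by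
        rw [e1, norm_sub_sq_real, norm_smul, norm_smul, mul_pow, hwn, he1, inner_smul_left,
          inner_smul_right, hwe]
        simp
      have e3 : ‖y + s • w - x‖ ^ 2 < d ^ 2 := by
        rw [e2]
        nlinarith [mul_pos (mul_pos hs0 (sub_pos.2 hκ1)) (sub_pos.2 hs1)]
      exact lt_of_pow_lt_pow_left₀ 2 hd0.le e3
    have h1 := hFpos _ hq
    have h2 := hFe _ (hsub hq)
    rw [add_sub_cancel_left, inner_smul_right, hwν, norm_smul, mul_pow, hwn] at h2
    have h3 := (abs_le.1 h2).2
    rw [Real.norm_of_nonneg hs0.le] at h3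
    nlinarith [mul_pos (mul_pos hs0 (sub_pos.2 hκ1)) (sub_pos.2 hs2)]
  set z := y - R • ν with hz
  have hzy : z ∈ ball y r := by
    rw [mem_ball, dist_eq_norm, hz, sub_sub_cancel_left, norm_neg, norm_smul, hν,
      Real.norm_of_nonneg hR0.le]
    linarith
  have hneg : ∀ q, ‖q - z‖ < R → F q < 0 := by
    intro q hq
    have e1 : q - z = (q - y) + R • ν := by rw [hz]; abel
    have hqy : q ∈ ball y r := by
      rw [mem_ball]
      have : dist z y = R := by
        rw [dist_eq_norm, hz, sub_sub_cancel_left, norm_neg, norm_smul, hν,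
          Real.norm_of_nonneg hR0.le, mul_one]
      have h3 := dist_triangle q z y
      rw [dist_eq_norm q z] at h3
      linarith
    have h2 : ‖q - z‖ ^ 2 < R ^ 2 := by gcongr
    rw [e1, norm_add_sq_real, inner_smul_right, norm_smul, hν, mul_one,
      Real.norm_of_nonneg hR0.le, real_inner_comm] at h2
    have h3 := (abs_le.1 (hFe q hqy)).2
    have h4 : 2 * R * F q ≤ 2 * R * inner ℝ ν (q - y) + (C * (2 * R)) * ‖q - y‖ ^ 2 := by
      nlinarith
    have h5 : (C * (2 * R)) * ‖q - y‖ ^ 2 ≤ 1 * ‖q - y‖ ^ 2 := by gcongr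
    by_contra hF
    push Not at hF
    have h6 : 0 ≤ 2 * R * F q := by positivity
    linarith
  refine ⟨z, ?_, ?_⟩
  · have : x - z = (d + R) • ν := by
      rw [add_smul, ← hxy, hz]; abel
    rw [this, norm_smul, hν, mul_one, Real.norm_of_nonneg (by positivity)]
  · intro x' hx'
    have hx'b : x' ∈ ball x d := hx'
    have hsegb : segment ℝ z x' ⊆ ball y r :=
      (convex_ball y r).segment_subset hzy (hsub hx'b)
    have hFz0 : F z < 0 := hneg z (by simpa using hR0)
    obtain ⟨p, hp, hFp⟩ := (convex_segment (𝕜 := ℝ) z x').isPreconnected.intermediate_value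
      (left_mem_segment ℝ z x') (right_mem_segment ℝ z x')
      hFc.continuousOn ⟨hFz0.le, (hFpos x' hx'b).le⟩
    have hpS : p ∈ S := (hFz p (hsegb hp)).2 hFp
    have hpz : R ≤ ‖p - z‖ := by
      by_contra h
      push Not at h
      exact absurd hFp (hneg p h).ne
    have h1 := dist_add_dist_of_mem_segment hp
    have h2 := infDist_le_dist_of_mem (x := x') hpS
    rw [dist_comm z p, dist_comm z x', dist_eq_norm p z, dist_eq_norm x' z, dist_comm p x'] at h1
    linarith

/-! ### The one-dimensional profile -/

/-- The profile `g(t) = √(t (1 - log t))` of the supersolution `g ∘ d`. -/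
def profile (t : ℝ) : ℝ := √(t + negMulLog t)

/-- The first derivative of `profile` on `(0, 1)`. -/
def profile' (t : ℝ) : ℝ := profile t * ((1 - (1 - log t)⁻¹) / (2 * t))

/-- The second derivative of `profile` on `(0, 1)`. -/
def profile'' (t : ℝ) : ℝ := -(profile t * ((1 + ((1 - log t)⁻¹) ^ 2) / (4 * t ^ 2)))

lemma continuous_profile : Continuous profile := by
  unfold profile
  have := continuous_negMulLog
  fun_prop

lemma profile_nonneg (t : ℝ) : 0 ≤ profile t := Real.sqrt_nonneg _

lemma add_negMulLog_eq (t : ℝ) : t + negMulLog t = t * (1 - log t) := by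
  simp only [negMulLog]; ring

lemma one_lt_one_sub_log {t : ℝ} (h0 : 0 < t) (h1 : t < 1) : 1 < 1 - log t := by
  linarith [Real.log_neg h0 h1]

lemma radicand_pos {t : ℝ} (h0 : 0 < t) (h1 : t < 1) : 0 < t + negMulLog t := by
  rw [add_negMulLog_eq]
  have := one_lt_one_sub_log h0 h1
  positivity

lemma profile_pos {t : ℝ} (h0 : 0 < t) (h1 : t < 1) : 0 < profile t :=
  Real.sqrt_pos.2 (radicand_pos h0 h1)

lemma hasDerivAt_profile {t : ℝ} (h0 : 0 < t) (h1 : t < 1) :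
    HasDerivAt profile (profile' t) t := by
  have h := ((hasDerivAt_id t).add (hasDerivAt_negMulLog h0.ne')).sqrt (radicand_pos h0 h1).ne'
  refine h.congr_deriv ?_
  have hp := profile_pos h0 h1
  have hL := one_lt_one_sub_log h0 h1
  have hsq : profile t ^ 2 = t * (1 - log t) := by
    rw [profile, Real.sq_sqrt (radicand_pos h0 h1).le, add_negMulLog_eq]
  change (1 + (-log t - 1)) / (2 * profile t) = profile' t
  unfold profile'
  have hL0 : 1 - log t ≠ 0 := by positivity
  field_simp
  rw [hsq]
  ring

lemma hasDerivAt_profile' {t : ℝ} (h0 : 0 < t) (h1 : t < 1) :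
    HasDerivAt profile' (profile'' t) t := by
  have hL := one_lt_one_sub_log h0 h1
  have hL0 : 1 - log t ≠ 0 := by positivity
  have hX := ((Real.hasDerivAt_log h0.ne').const_sub 1).inv hL0
  have h2t : HasDerivAt (fun s : ℝ => 2 * s) 2 t := by
    simpa using (hasDerivAt_id t).const_mul (2 : ℝ)
  have h := (hasDerivAt_profile h0 h1).mul ((hX.const_sub 1).div h2t (by positivity))
  refine h.congr_deriv ?_
  simp only [profile', profile'', Pi.inv_apply, Pi.div_apply]
  field_simp
  ring

lemma monotoneOn_profile : MonotoneOn profile (Icc 0 1) := by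
  apply monotoneOn_of_deriv_nonneg (convex_Icc 0 1) continuous_profile.continuousOn
  · intro x hx
    rw [interior_Icc] at hx
    exact (hasDerivAt_profile hx.1 hx.2).differentiableAt.differentiableWithinAt
  · intro x hx
    rw [interior_Icc] at hx
    rw [(hasDerivAt_profile hx.1 hx.2).deriv]
    have hL := one_lt_one_sub_log hx.1 hx.2
    have : (1 - log x)⁻¹ ≤ 1 := inv_le_one_of_one_le₀ hL.le
    have := hx.1
    have := profile_nonneg x
    unfold profile'
    apply mul_nonneg this
    apply div_nonneg <;> linarith

lemma continuousOn_profile'' {m b : ℝ} (hm : 0 < m) (hb : b < 1) :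
    ContinuousOn profile'' (Icc m b) := by
  unfold profile''
  have hlog : ContinuousOn log (Icc m b) :=
    Real.continuousOn_log.mono fun x hx => (hm.trans_le hx.1).ne'
  have hne : ∀ x ∈ Icc m b, 1 - log x ≠ 0 := fun x hx =>
    (zero_lt_one.trans (one_lt_one_sub_log (hm.trans_le hx.1) (hx.2.trans_lt hb))).ne'
  refine (continuous_profile.continuousOn.mul (ContinuousOn.div ?_ ?_ ?_)).neg
  · exact continuousOn_const.add (((continuousOn_const.sub hlog).inv₀ hne).pow 2)
  · fun_prop
  · intro x hx
    have := hm.trans_le hx.1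
    positivity

/-- A function with nonnegative second derivative lies above its tangent lines. -/
lemma tangent_le_of_deriv2_nonneg {k k1 k2 : ℝ → ℝ} {a b : ℝ}
    (h1 : ∀ s ∈ Icc a b, HasDerivAt k (k1 s) s) (h2 : ∀ s ∈ Icc a b, HasDerivAt k1 (k2 s) s)
    (hk : ∀ s ∈ Icc a b, 0 ≤ k2 s) {t s : ℝ} (ht : t ∈ Icc a b) (hs : s ∈ Icc a b) :
    k t + k1 t * (s - t) ≤ k s := by
  have hmono : MonotoneOn k1 (Icc a b) := by
    apply monotoneOn_of_deriv_nonneg (convex_Icc a b)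
    · exact fun x hx => (h2 x hx).continuousAt.continuousWithinAt
    · exact fun x hx => (h2 x (interior_subset hx)).differentiableAt.differentiableWithinAt
    · intro x hx
      rw [(h2 x (interior_subset hx)).deriv]
      exact hk x (interior_subset hx)
  rcases lt_trichotomy t s with h | h | h
  · have hsub : Icc t s ⊆ Icc a b := Icc_subset_Icc ht.1 hs.2
    obtain ⟨c, hc, he⟩ := exists_hasDerivAt_eq_slope k k1 h
      (fun x hx => (h1 x (hsub hx)).continuousAt.continuousWithinAt)
      (fun x hx => h1 x (hsub (Ioo_subset_Icc_self hx)))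
    have := hmono ht (hsub (Ioo_subset_Icc_self hc)) hc.1.le
    rw [eq_div_iff (by linarith)] at he
    nlinarith
  · subst h; simp
  · have hsub : Icc s t ⊆ Icc a b := Icc_subset_Icc hs.1 ht.2
    obtain ⟨c, hc, he⟩ := exists_hasDerivAt_eq_slope k k1 h
      (fun x hx => (h1 x (hsub hx)).continuousAt.continuousWithinAt)
      (fun x hx => h1 x (hsub (Ioo_subset_Icc_self hx)))
    have := hmono (hsub (Ioo_subset_Icc_self hc)) ht hc.2.le
    rw [eq_div_iff (by linarith)] at he
    nlinarith

/-- Second-order Taylor upper bound for `profile`, uniform on `[m, 1/2]`. -/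
lemma profile_taylor {m : ℝ} (hm : 0 < m) {ε : ℝ} (hε : 0 < ε) :
    ∃ η > 0, η < m ∧ η < 1 / 4 ∧ ∀ t ∈ Icc m (1 / 2), ∀ s, |s - t| ≤ η →
      profile s ≤ profile t + profile' t * (s - t) + (profile'' t + ε) / 2 * (s - t) ^ 2 := by
  have huc := isCompact_Icc.uniformContinuousOn_of_continuous
    (continuousOn_profile'' (m := m / 2) (b := 3 / 4) (by positivity) (by norm_num))
  obtain ⟨η₀, hη₀, H⟩ := Metric.uniformContinuousOn_iff.1 huc ε hε
  set η := min (η₀ / 2) (min (m / 2) (1 / 8)) with hη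
  have i1 : η ≤ η₀ / 2 := min_le_left _ _
  have i2 : η ≤ m / 2 := (min_le_right _ _).trans (min_le_left _ _)
  have i3 : η ≤ 1 / 8 := (min_le_right _ _).trans (min_le_right _ _)
  have hη0 : 0 < η := by positivity
  refine ⟨η, hη0, by linarith, by linarith, ?_⟩
  intro t ht s hs
  rw [abs_le] at hs
  have hr : ∀ x ∈ Icc (t - η) (t + η), x ∈ Icc (m / 2) (3 / 4) := fun x hx =>
    ⟨by linarith [hx.1, ht.1], by linarith [hx.2, ht.2]⟩
  have hq : ∀ x : ℝ, HasDerivAt (fun s => (profile'' t + ε) / 2 * (s - t) ^ 2)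
      ((profile'' t + ε) * (x - t)) x := by
    intro x
    refine ((((hasDerivAt_id x).sub_const t).pow 2).const_mul
      ((profile'' t + ε) / 2)).congr_deriv ?_
    simp; ring
  have hq' : ∀ x : ℝ, HasDerivAt (fun s => (profile'' t + ε) * (s - t)) (profile'' t + ε) x := by
    intro x
    simpa using ((hasDerivAt_id x).sub_const t).const_mul (profile'' t + ε)
  have key := tangent_le_of_deriv2_nonneg
    (k := fun s => (profile'' t + ε) / 2 * (s - t) ^ 2 - profile s)
    (k1 := fun s => (profile'' t + ε) * (s - t) - profile' s)
    (k2 := fun s => (profile'' t + ε) - profile'' s) (a := t - η) (b := t + η) (t := t) (s := s)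
    (fun x hx => (hq x).sub (hasDerivAt_profile (by linarith [(hr x hx).1])
      (by linarith [(hr x hx).2])))
    (fun x hx => (hq' x).sub (hasDerivAt_profile' (by linarith [(hr x hx).1])
      (by linarith [(hr x hx).2])))
    (by
      intro x hx
      have h := H t (hr t ⟨by linarith, by linarith⟩) x (hr x hx) (by
        rw [Real.dist_eq, abs_lt]; constructor <;> linarith [hx.1, hx.2])
      rw [Real.dist_eq, abs_lt] at h
      linarith [h.1])
    ⟨by linarith, by linarith⟩ ⟨by linarith, by linarith⟩
  simp only [sub_self] at key
  nlinarith

/-- `t (1 - log t)² → 0` as `t → 0⁺`. -/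
lemma exists_log_small {ε : ℝ} (hε : 0 < ε) :
    ∃ δ > 0, ∀ t, 0 < t → t < δ → t * (1 - log t) ^ 2 < ε := by
  have h1 : Tendsto (fun t : ℝ => (t ^ (1 / 2 : ℝ) - log t * t ^ (1 / 2 : ℝ)) ^ 2)
      (nhdsWithin 0 (Ioi 0)) (nhds 0) := by
    have ha : Tendsto (fun t : ℝ => t ^ (1 / 2 : ℝ)) (nhdsWithin 0 (Ioi 0)) (nhds 0) := by
      have := (Real.continuous_rpow_const (q := (1 / 2 : ℝ)) (by norm_num)).tendsto 0
      rw [Real.zero_rpow (by norm_num)] at this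
      exact this.mono_left nhdsWithin_le_nhds
    have hb := tendsto_log_mul_rpow_nhdsGT_zero (r := 1 / 2) (by norm_num)
    simpa using (ha.sub hb).pow 2
  have h2 := h1.eventually_lt_const hε
  rw [eventually_nhdsWithin_iff] at h2
  obtain ⟨δ, hδ, H⟩ := Metric.eventually_nhds_iff.1 h2
  refine ⟨δ, hδ, fun t ht0 ht => ?_⟩
  have h3 := H (y := t) (by rw [Real.dist_eq, sub_zero, abs_of_pos ht0]; exact ht) ht0
  have h4 : (t ^ (1 / 2 : ℝ)) ^ 2 = t := by
    rw [← Real.sqrt_eq_rpow, Real.sq_sqrt ht0.le]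
  calc t * (1 - log t) ^ 2 = (t ^ (1 / 2 : ℝ)) ^ 2 * (1 - log t) ^ 2 := by rw [h4]
    _ = (t ^ (1 / 2 : ℝ) - log t * t ^ (1 / 2 : ℝ)) ^ 2 := by ring
    _ < ε := h3

/-! ### The discrete supersolution inequality -/

/-- The potential `1/(4 t²) + X(t)²/(8 t²)`, with `X(t) = (1 - log t)⁻¹`. -/
def potential (t : ℝ) : ℝ := 1 / (4 * t ^ 2) + 1 / 8 * (((1 - log t)⁻¹) ^ 2 / t ^ 2)

/-- The slack `X²/(8 t²)` between the constants `1/4` and `1/8` absorbs the curvature term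
`c g'/g ≤ c/(2 t)` for small `t`. -/
lemma potential_le {t c : ℝ} (h0 : 0 < t) (h1 : t < 1) (hc0 : 0 ≤ c)
    (hc : 4 * c * (t * (1 - log t) ^ 2) ≤ 1) :
    profile t * potential t ≤ -profile'' t - c * profile' t := by
  have hL := one_lt_one_sub_log h0 h1
  have hL0 : 0 < 1 - log t := by linarith
  have hp := profile_nonneg t
  have hX : 0 < (1 - log t)⁻¹ := by positivity
  suffices h : potential t ≤ (1 + ((1 - log t)⁻¹) ^ 2) / (4 * t ^ 2)
      - c * ((1 - (1 - log t)⁻¹) / (2 * t)) by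
    have := mul_le_mul_of_nonneg_left h hp
    unfold profile' profile''
    linarith
  have hcX : 4 * c * t ≤ ((1 - log t)⁻¹) ^ 2 := by
    rw [inv_pow, ← one_div, le_div_iff₀ (by positivity)]
    linarith
  have e1 : c * ((1 - (1 - log t)⁻¹) / (2 * t)) ≤ c * (1 / (2 * t)) := by
    gcongr; linarith
  have e2 : c * (1 / (2 * t)) ≤ ((1 - log t)⁻¹) ^ 2 / (8 * t ^ 2) := by
    rw [mul_one_div, div_le_div_iff₀ (by positivity) (by positivity)]
    nlinarith
  have e3 : (1 + ((1 - log t)⁻¹) ^ 2) / (4 * t ^ 2) - ((1 - log t)⁻¹) ^ 2 / (8 * t ^ 2)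
      = potential t := by
    unfold potential; field_simp; ring
  linarith

/-- First- and second-difference bounds for the norm at `w` in the direction `e`. -/
lemma norm_difference_bounds {n : ℕ} {w e : Euc n} (he : ‖e‖ = 1) (hw : 0 < ‖w‖) (h : ℝ) :
    ‖w‖ + h * (inner ℝ w e / ‖w‖) ≤ ‖w + h • e‖ ∧ ‖w‖ - h * (inner ℝ w e / ‖w‖) ≤ ‖w - h • e‖ ∧
      ‖w + h • e‖ + ‖w - h • e‖ ≤ 2 * ‖w‖ + h ^ 2 / ‖w‖ := by
  have lin : ∀ k : ℝ, ‖w‖ + k * (inner ℝ w e / ‖w‖) ≤ ‖w + k • e‖ := by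
    intro k
    have h1 := real_inner_le_norm w (w + k • e)
    rw [inner_add_right, inner_smul_right, real_inner_self_eq_norm_sq] at h1
    have : ‖w‖ * (‖w‖ + k * (inner ℝ w e / ‖w‖)) ≤ ‖w‖ * ‖w + k • e‖ := by
      refine le_trans (le_of_eq ?_) h1
      field_simp
    exact le_of_mul_le_mul_left this hw
  refine ⟨lin h, ?_, ?_⟩
  · have := lin (-h)
    rw [neg_smul, ← sub_eq_add_neg] at this
    linarith
  · have par := parallelogram_law_with_norm ℝ w (h • e)
    rw [norm_smul, he, mul_one] at par
    have hh : ‖h‖ ^ 2 = h ^ 2 := by rw [Real.norm_eq_abs, sq_abs]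
    rw [hh] at par
    refine (pow_le_pow_iff_left₀ (by positivity) (by positivity) two_ne_zero).1 ?_
    have e1 : (2 * ‖w‖ + h ^ 2 / ‖w‖) ^ 2 = 4 * ‖w‖ ^ 2 + 4 * h ^ 2 + (h ^ 2 / ‖w‖) ^ 2 := by
      field_simp; ring
    rw [e1]
    nlinarith [sq_nonneg (‖w + h • e‖ - ‖w - h • e‖), sq_nonneg (h ^ 2 / ‖w‖)]

/-- Lower bound for the second difference of a concave increasing profile with slope `g₁` and
curvature `g₂` when the argument moves by `P ≈ h a` and `Q ≈ -h a`. -/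
lemma second_difference_bound {h a P Q R B ε g₁ g₂ : ℝ} (hh : 0 < h) (ha : |a| ≤ 1)
    (hP : h * a ≤ P) (hQ : -(h * a) ≤ Q) (hPh : |P| ≤ h) (hQh : |Q| ≤ h)
    (hPQ : P + Q ≤ h ^ 2 / R) (hR : 0 < R) (hg₁ : 0 ≤ g₁) (hg₂ : g₂ ≤ 0) (hB : -g₂ ≤ B)
    (hε : 0 < ε) :
    h ^ 2 * (-g₂ * a ^ 2 - g₁ / R - h * B / R - ε) ≤
      -g₁ * (P + Q) - (g₂ + ε) / 2 * (P ^ 2 + Q ^ 2) := by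
  rw [abs_le] at ha
  have hP2 : P ^ 2 ≤ h ^ 2 := sq_le_sq' (abs_le.1 hPh).1 (abs_le.1 hPh).2
  have hQ2 : Q ^ 2 ≤ h ^ 2 := sq_le_sq' (abs_le.1 hQh).1 (abs_le.1 hQh).2
  have p1 : h ^ 2 * a ^ 2 - 2 * h * (P - h * a) ≤ P ^ 2 := by
    nlinarith [sq_nonneg (P - h * a),
      mul_nonneg hh.le (mul_nonneg (by linarith [ha.1] : 0 ≤ 1 + a) (sub_nonneg.2 hP))]
  have q1 : h ^ 2 * a ^ 2 - 2 * h * (Q + h * a) ≤ Q ^ 2 := by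
    nlinarith [sq_nonneg (Q + h * a),
      mul_nonneg hh.le (mul_nonneg (by linarith [ha.2] : 0 ≤ 1 - a)
        (by linarith : 0 ≤ Q + h * a))]
  have s1 : 2 * h ^ 2 * a ^ 2 - 2 * h * (h ^ 2 / R) ≤ P ^ 2 + Q ^ 2 := by
    nlinarith [mul_le_mul_of_nonneg_left hPQ hh.le]
  have t1 := mul_le_mul_of_nonneg_left hPQ hg₁
  have t2 := mul_le_mul_of_nonneg_left s1 (by linarith : 0 ≤ -g₂ / 2)
  have t3 : ε / 2 * (P ^ 2 + Q ^ 2) ≤ ε * h ^ 2 := by nlinarith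
  have t4 : -g₂ * (h * (h ^ 2 / R)) ≤ B * (h * (h ^ 2 / R)) := by gcongr
  have e1 : h ^ 2 * (-g₂ * a ^ 2 - g₁ / R - h * B / R - ε)
      = -g₂ * (h ^ 2 * a ^ 2) - g₁ * (h ^ 2 / R) - B * (h * (h ^ 2 / R)) - ε * h ^ 2 := by
    ring
  rw [e1]
  linarith

/-- The discrete supersolution property: where `d` is touched from above by spheres of radius
`R`, the discrete negative Laplacian of `g ∘ d` is at least `potential d * g ∘ d`, up to an error
uniform on compact sets. -/
lemma discrete_supersolution {n : ℕ} {S : Set (Euc n)} {R δ : ℝ} (hR : 0 < R) (hδ : δ ≤ 1 / 2)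
    (hlog : ∀ t, 0 < t → t < δ → 4 * (n / R) * (t * (1 - log t) ^ 2) ≤ 1)
    (htouch : ∀ x, 0 < infDist x S → infDist x S < δ →
      ∃ z, ‖x - z‖ = infDist x S + R ∧
        ∀ x', dist x' x < infDist x S → infDist x' S ≤ ‖x' - z‖ - R)
    {K : Set (Euc n)} (hK : IsCompact K) (hKS : ∀ x ∈ K, 0 < infDist x S ∧ infDist x S < δ)
    {ε : ℝ} (hε : 0 < ε) :
    ∃ η > 0, ∀ h, 0 < h → h < η → ∀ x ∈ K,
      h ^ 2 * (profile (infDist x S) * potential (infDist x S) - ε) ≤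
        ∑ i : Fin n, (2 * profile (infDist x S)
          - profile (infDist (x + h • EuclideanSpace.single i (1 : ℝ)) S)
          - profile (infDist (x - h • EuclideanSpace.single i (1 : ℝ)) S)) := by
  rcases K.eq_empty_or_nonempty with rfl | hKne
  · exact ⟨1, one_pos, fun h _ _ x hx => absurd hx (notMem_empty x)⟩
  obtain ⟨x₀, hx₀, hmin⟩ := hK.exists_isMinOn hKne (continuous_infDist_pt S).continuousOn
  set m := infDist x₀ S with hm
  have hm0 : 0 < m := (hKS x₀ hx₀).1
  obtain ⟨B, hB⟩ := isCompact_Icc.exists_bound_of_continuousOn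
    (continuousOn_profile'' (m := m) (b := 1 / 2) hm0 (by norm_num))
  set ε₁ := ε / (2 * (n + 1)) with hε₁
  have hε₁0 : 0 < ε₁ := by positivity
  obtain ⟨η₁, hη₁0, hη₁m, hη₁4, htay⟩ := profile_taylor hm0 hε₁0
  refine ⟨min η₁ (ε₁ * R / (|B| + 1)), by positivity, ?_⟩
  intro h hh hhη x hx
  have hhη₁ : h < η₁ := hhη.trans_le (min_le_left _ _)
  have hhB : h * |B| / R ≤ ε₁ := by
    have h1 : h < ε₁ * R / (|B| + 1) := hhη.trans_le (min_le_right _ _)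
    rw [lt_div_iff₀ (by positivity)] at h1
    rw [div_le_iff₀ hR]
    nlinarith
  obtain ⟨ht0, htδ⟩ := hKS x hx
  set t := infDist x S with ht
  have hmt : m ≤ t := hmin hx
  have htI : t ∈ Icc m (1 / 2) := ⟨hmt, by linarith⟩
  obtain ⟨z, hz, htz⟩ := htouch x ht0 htδ
  set w := x - z with hw
  have hw0 : 0 < ‖w‖ := by rw [hz]; positivity
  have ht1 : t < 1 := by linarith
  have hg1 : 0 ≤ profile' t := by
    have hL := one_lt_one_sub_log ht0 ht1
    have : (1 - log t)⁻¹ ≤ 1 := inv_le_one_of_one_le₀ hL.le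
    exact mul_nonneg (profile_nonneg t) (div_nonneg (by linarith) (by linarith))
  have hg2 : profile'' t ≤ 0 := by
    have := profile_nonneg t
    unfold profile''
    rw [neg_nonpos]
    positivity
  have hgB : -profile'' t ≤ |B| := by
    have := hB t htI
    rw [Real.norm_eq_abs] at this
    exact (neg_le_abs _).trans (this.trans (le_abs_self B))
  have hone : ∀ i : Fin n,
      h ^ 2 * (-profile'' t * (w i / ‖w‖) ^ 2 - profile' t / R - 2 * ε₁) ≤ 2 * profile t
          - profile (infDist (x + h • EuclideanSpace.single i (1 : ℝ)) S)
          - profile (infDist (x - h • EuclideanSpace.single i (1 : ℝ)) S) := by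
    intro i
    set e : Euc n := EuclideanSpace.single i (1 : ℝ) with he
    have he1 : ‖e‖ = 1 := by simp [he]
    have hwe : inner ℝ w e = w i := by rw [he, EuclideanSpace.inner_single_right]; simp
    obtain ⟨b1, b2, b3⟩ := norm_difference_bounds he1 hw0 h
    rw [hwe] at b1 b2
    have hhe : ‖h • e‖ = h := by rw [norm_smul, he1, mul_one, Real.norm_of_nonneg hh.le]
    set P := ‖w + h • e‖ - R - t with hP
    set Q := ‖w - h • e‖ - R - t with hQ
    have hPh : |P| ≤ h := by
      have := abs_norm_sub_norm_le (w + h • e) w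
      rw [add_sub_cancel_left, hhe, hz] at this
      convert this using 2
      rw [hP]; ring
    have hQh : |Q| ≤ h := by
      have := abs_norm_sub_norm_le (w - h • e) w
      rw [sub_sub_cancel_left, norm_neg, hhe, hz] at this
      convert this using 2
      rw [hQ]; ring
    have hai : |w i / ‖w‖| ≤ 1 := by
      rw [abs_div, abs_of_pos hw0, div_le_one hw0]
      have := abs_real_inner_le_norm w e
      rwa [hwe, he1, mul_one] at this
    have hPQ : P + Q ≤ h ^ 2 / R := by
      have : h ^ 2 / ‖w‖ ≤ h ^ 2 / R := by
        gcongr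
        rw [hz]; linarith
      rw [hP, hQ]; linarith
    have step : ∀ (x' : Euc n) (D : ℝ), dist x' x < t → D = ‖x' - z‖ - R - t → |D| ≤ h →
        profile (infDist x' S) ≤
          profile t + profile' t * D + (profile'' t + ε₁) / 2 * D ^ 2 := by
      intro x' D hx' hD hDh
      have h1 := htz x' hx'
      have h2 := htay t htI (t + D) (by rw [add_sub_cancel_left]; linarith)
      rw [add_sub_cancel_left] at h2
      have h3 : ‖x' - z‖ - R = t + D := by rw [hD]; ring
      rw [h3] at h1
      refine le_trans (monotoneOn_profile ⟨infDist_nonneg, ?_⟩ ⟨?_, ?_⟩ h1) h2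
      · linarith [(abs_le.1 hDh).2]
      · exact infDist_nonneg.trans h1
      · linarith [(abs_le.1 hDh).2]
    have sP := step (x + h • e) P
      (by rw [dist_eq_norm, add_sub_cancel_left, hhe]; linarith)
      (by rw [hP, hw]; congr 3; abel) hPh
    have sQ := step (x - h • e) Q
      (by rw [dist_eq_norm, sub_sub_cancel_left, norm_neg, hhe]; linarith)
      (by rw [hQ, hw]; congr 3; abel) hQh
    have key := second_difference_bound (a := w i / ‖w‖) (P := P) (Q := Q) (g₁ := profile' t)
      (g₂ := profile'' t) (B := |B|) (ε := ε₁) (R := R) hh hai (by rw [hP]; linarith)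
      (by rw [hQ]; linarith) hPh hQh hPQ hR hg1 hg2 hgB hε₁0
    have k2 : h ^ 2 * (-profile'' t * (w i / ‖w‖) ^ 2 - profile' t / R - 2 * ε₁) ≤
        h ^ 2 * (-profile'' t * (w i / ‖w‖) ^ 2 - profile' t / R - h * |B| / R - ε₁) := by
      exact mul_le_mul_of_nonneg_left (by linarith) (sq_nonneg h)
    linarith
  refine le_trans ?_ (Finset.sum_le_sum fun i _ => hone i)
  have hsum : ∑ i : Fin n, (w i / ‖w‖) ^ 2 = 1 := by
    have : ∑ i : Fin n, (w i) ^ 2 = ‖w‖ ^ 2 := by simp [EuclideanSpace.norm_sq_eq]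
    simp_rw [div_pow]
    rw [← Finset.sum_div, this, div_self (by positivity)]
  rw [← Finset.mul_sum, Finset.sum_sub_distrib, Finset.sum_sub_distrib, ← Finset.mul_sum, hsum]
  simp only [Finset.sum_const, Finset.card_univ, Fintype.card_fin, nsmul_eq_mul]
  have hV := potential_le (c := n / R) ht0 ht1 (by positivity) (hlog t ht0 htδ)
  have hεn : (n : ℝ) * (2 * ε₁) ≤ ε := by
    rw [hε₁]
    field_simp
    linarith
  have e1 : (n : ℝ) / R * profile' t = n * (profile' t / R) := by ring
  rw [e1] at hV
  gcongr
  linarith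

/-! ### The discrete Picone inequality and the passage to the limit -/

lemma continuous_sq_mul {n : ℕ} {u ψ : Euc n → ℝ} (hu : Continuous u)
    (hψ : ∀ x ∈ tsupport u, ContinuousAt ψ x) : Continuous fun x => u x ^ 2 * ψ x := by
  rw [continuous_iff_continuousAt]
  intro x
  by_cases hx : x ∈ tsupport u
  · exact (hu.continuousAt.pow 2).mul (hψ x hx)
  · have h0 := notMem_tsupport_iff_eventuallyEq.1 hx
    have : (fun x => u x ^ 2 * ψ x) =ᶠ[nhds x] fun _ => 0 := by
      filter_upwards [h0] with y hy
      simp [hy]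
    exact continuousAt_const.congr this.symm

lemma hasCompactSupport_sq_mul {n : ℕ} {u : Euc n → ℝ} (ψ : Euc n → ℝ)
    (hu : HasCompactSupport u) : HasCompactSupport fun x => u x ^ 2 * ψ x := by
  refine hu.mono fun x hx => ?_
  contrapose! hx
  simp [Function.notMem_support.1 hx]

lemma integrable_sq_mul {n : ℕ} {u ψ : Euc n → ℝ} (hu : Continuous u) (huc : HasCompactSupport u)
    (hψ : ∀ x ∈ tsupport u, ContinuousAt ψ x) : Integrable fun x => u x ^ 2 * ψ x :=
  (continuous_sq_mul hu hψ).integrable_of_hasCompactSupport (hasCompactSupport_sq_mul ψ huc)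

/-- Discrete Picone inequality at a pair of points. -/
lemma picone_pointwise {a b A B : ℝ} (hA : 0 ≤ A) (hB : 0 ≤ B) (ha : a ≠ 0 → 0 < A)
    (hb : b ≠ 0 → 0 < B) :
    a ^ 2 * A⁻¹ * (A - B) + b ^ 2 * B⁻¹ * (B - A) ≤ (a - b) ^ 2 := by
  by_cases ha0 : a = 0
  · subst ha0
    by_cases hb0 : b = 0
    · subst hb0; simp
    · have := hb hb0
      have e : b ^ 2 * B⁻¹ * (B - A) = b ^ 2 - b ^ 2 * B⁻¹ * A := by field_simp
      rw [e]
      have : 0 ≤ b ^ 2 * B⁻¹ * A := by positivity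
      nlinarith
  · have hA' := ha ha0
    by_cases hb0 : b = 0
    · subst hb0
      have e : a ^ 2 * A⁻¹ * (A - B) = a ^ 2 - a ^ 2 * A⁻¹ * B := by field_simp
      rw [e]
      have : 0 ≤ a ^ 2 * A⁻¹ * B := by positivity
      nlinarith
    · have hB' := hb hb0
      have e : (a - b) ^ 2 - (a ^ 2 * A⁻¹ * (A - B) + b ^ 2 * B⁻¹ * (B - A))
          = (a * B - b * A) ^ 2 / (A * B) := by
        field_simp; ring
      have : 0 ≤ (a * B - b * A) ^ 2 / (A * B) := by positivity
      linarith

/-- Integrated discrete Picone inequality; translation invariance plays the role of integration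
by parts. -/
lemma integral_picone {n : ℕ} {u φ : Euc n → ℝ} (hu : Continuous u) (huc : HasCompactSupport u)
    (hφ : Continuous φ) (hφ0 : ∀ x, 0 ≤ φ x) (hφpos : ∀ x ∈ tsupport u, 0 < φ x) (v : Euc n) :
    ∫ x, u x ^ 2 * (φ x)⁻¹ * (2 * φ x - φ (x + v) - φ (x - v)) ≤ ∫ x, (u (x + v) - u x) ^ 2 := by
  have hinv : ∀ x ∈ tsupport u, ContinuousAt (fun x => (φ x)⁻¹) x := fun x hx =>
    hφ.continuousAt.inv₀ (hφpos x hx).ne'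
  have hint : ∀ ψ : Euc n → ℝ, Continuous ψ →
      Integrable fun x => u x ^ 2 * (φ x)⁻¹ * ψ x := by
    intro ψ hψ
    simp_rw [mul_assoc]
    exact integrable_sq_mul hu huc fun x hx => (hinv x hx).mul hψ.continuousAt
  have h1 := hint (fun x => φ x - φ (x - v)) (by fun_prop)
  have h2 := hint (fun x => φ x - φ (x + v)) (by fun_prop)
  have h1v : Integrable fun x => u (x + v) ^ 2 * (φ (x + v))⁻¹ * (φ (x + v) - φ x) := by
    simpa using h1.comp_add_right v
  have h1e : ∫ x, u (x + v) ^ 2 * (φ (x + v))⁻¹ * (φ (x + v) - φ x)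
      = ∫ x, u x ^ 2 * (φ x)⁻¹ * (φ x - φ (x - v)) := by
    simpa using integral_add_right_eq_self
      (fun x => u x ^ 2 * (φ x)⁻¹ * (φ x - φ (x - v))) v
  have huv : HasCompactSupport fun x => u (x + v) :=
    huc.comp_homeomorph (Homeomorph.addRight v)
  have hrhs : Integrable fun x => (u (x + v) - u x) ^ 2 := by
    have hcs : HasCompactSupport fun x => (u (x + v) - u x) ^ 2 := by
      have h := (huv.sub huc).comp_left (g := fun y : ℝ => y ^ 2) (by norm_num)
      exact h
    exact (by fun_prop : Continuous fun x => (u (x + v) - u x) ^ 2).integrable_of_hasCompactSupport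
      hcs
  have hpos : ∀ x, u x ≠ 0 → 0 < φ x := fun x hx => hφpos x (subset_tsupport u hx)
  calc ∫ x, u x ^ 2 * (φ x)⁻¹ * (2 * φ x - φ (x + v) - φ (x - v))
      = ∫ x, (u x ^ 2 * (φ x)⁻¹ * (φ x - φ (x - v)) + u x ^ 2 * (φ x)⁻¹ * (φ x - φ (x + v))) := by
        congr 1; ext x; ring
    _ = ∫ x, (u (x + v) ^ 2 * (φ (x + v))⁻¹ * (φ (x + v) - φ x)
          + u x ^ 2 * (φ x)⁻¹ * (φ x - φ (x + v))) := by
        rw [integral_add h1 h2, integral_add h1v h2, h1e]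
    _ ≤ ∫ x, (u (x + v) - u x) ^ 2 :=
        integral_mono (h1v.add h2) hrhs fun x =>
          picone_pointwise (hφ0 _) (hφ0 _) (hpos _) (hpos _)

lemma tendsto_integral_difference_quotient {n : ℕ} {u : Euc n → ℝ} (hu : ContDiff ℝ (⊤ : ℕ∞) u)
    (huc : HasCompactSupport u) (v : Euc n) :
    Tendsto (fun h : ℝ => ∫ x, (h⁻¹ * (u (x + h • v) - u x)) ^ 2) (nhdsWithin 0 (Ioi 0))
      (nhds (∫ x, (fderiv ℝ u x v) ^ 2)) := by
  obtain ⟨L, hL⟩ := hu.lipschitzWith_of_hasCompactSupport huc (by simp)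
  have hcont := hu.continuous
  have hKc : IsCompact (cthickening ‖v‖ (tsupport u)) := IsCompact.cthickening huc
  apply tendsto_integral_filter_of_dominated_convergence
    ((cthickening ‖v‖ (tsupport u)).indicator fun _ => (L * ‖v‖) ^ 2)
  · exact Eventually.of_forall fun h =>
      (by fun_prop : Continuous fun x => (h⁻¹ * (u (x + h • v) - u x)) ^ 2).aestronglyMeasurable
  · have hlt : ∀ᶠ h : ℝ in nhdsWithin 0 (Ioi 0), h < 1 :=
      mem_nhdsWithin_of_mem_nhds (Iio_mem_nhds one_pos)
    filter_upwards [self_mem_nhdsWithin, hlt] with h hh0 hh1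
    have hh0 : 0 < h := hh0
    refine Eventually.of_forall fun x => ?_
    have hhv : ‖h • v‖ ≤ ‖v‖ := by
      rw [norm_smul, Real.norm_of_nonneg hh0.le]
      exact mul_le_of_le_one_left (norm_nonneg v) hh1.le
    by_cases hx : x ∈ cthickening ‖v‖ (tsupport u)
    · rw [indicator_of_mem hx, norm_pow]
      gcongr
      have h1 := hL.dist_le_mul (x + h • v) x
      rw [Real.dist_eq, dist_eq_norm, add_sub_cancel_left, norm_smul,
        Real.norm_of_nonneg hh0.le] at h1
      rw [norm_mul, norm_inv, Real.norm_of_nonneg hh0.le, Real.norm_eq_abs,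
        inv_mul_le_iff₀ hh0]
      linarith
    · have hx1 : x ∉ tsupport u := fun h' => hx (self_subset_cthickening _ h')
      have hx2 : x + h • v ∉ tsupport u := by
        intro h'
        apply hx
        refine mem_cthickening_of_dist_le x _ _ _ h' ?_
        rw [dist_eq_norm, sub_add_cancel_left, norm_neg]
        exact hhv
      rw [indicator_of_notMem hx, image_eq_zero_of_notMem_tsupport hx1,
        image_eq_zero_of_notMem_tsupport hx2]
      simp
  · rw [integrable_indicator_iff hKc.isClosed.measurableSet]
    exact integrableOn_const hKc.measure_lt_top.ne
  · refine Eventually.of_forall fun x => ?_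
    have hd := (hu.differentiable (by simp) x).hasFDerivAt.hasLineDerivAt v
    exact hd.tendsto_slope_zero_right.pow 2

lemma sum_gradient_sq {n : ℕ} (u : Euc n → ℝ) (x : Euc n) :
    ∑ i, (gradient u x i) ^ 2
      = ∑ i, (fderiv ℝ u x (EuclideanSpace.single i (1 : ℝ))) ^ 2 := by
  refine Finset.sum_congr rfl fun i _ => ?_
  rw [← inner_gradient_left, EuclideanSpace.inner_single_right]
  simp

lemma integrable_fderiv_sq {n : ℕ} {u : Euc n → ℝ} (hu : ContDiff ℝ (⊤ : ℕ∞) u)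
    (huc : HasCompactSupport u) (v : Euc n) : Integrable fun x => (fderiv ℝ u x v) ^ 2 := by
  have hc : Continuous fun x => fderiv ℝ u x v :=
    (hu.continuous_fderiv (by simp)).clm_apply continuous_const
  have hs : HasCompactSupport fun x => (fderiv ℝ u x v) ^ 2 := by
    have h := (huc.fderiv (𝕜 := ℝ)).comp_left
      (g := fun A : Euc n →L[ℝ] ℝ => (A v) ^ 2) (by simp)
    exact h
  exact (hc.pow 2).integrable_of_hasCompactSupport hs

/-- If a continuous `φ ≥ 0`, positive on the support of `u`, is a discrete supersolution for the
potential `V` up to arbitrarily small errors, then `∫ V u² ≤ ∫ |∇u|²`. -/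
lemma hardy_of_discrete_supersolution {n : ℕ} {u φ V : Euc n → ℝ}
    (hu : ContDiff ℝ (⊤ : ℕ∞) u) (huc : HasCompactSupport u) (hφ : Continuous φ)
    (hφ0 : ∀ x, 0 ≤ φ x) (hφpos : ∀ x ∈ tsupport u, 0 < φ x)
    (hV : ∀ x ∈ tsupport u, ContinuousAt V x)
    (hsuper : ∀ ε > 0, ∃ η > 0, ∀ h : ℝ, 0 < h → h < η → ∀ x ∈ tsupport u,
      h ^ 2 * (φ x * V x - ε) ≤ ∑ i : Fin n, (2 * φ x
        - φ (x + h • EuclideanSpace.single i (1 : ℝ))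
        - φ (x - h • EuclideanSpace.single i (1 : ℝ)))) :
    ∫ x, u x ^ 2 * V x ≤ ∫ x, ∑ i, (gradient u x i) ^ 2 := by
  have hcont := hu.continuous
  have hinv : ∀ x ∈ tsupport u, ContinuousAt (fun x => (φ x)⁻¹) x := fun x hx =>
    hφ.continuousAt.inv₀ (hφpos x hx).ne'
  have hiV := integrable_sq_mul hcont huc hV
  have hiφ := integrable_sq_mul hcont huc hinv
  have hrhs : ∫ x, ∑ i, (gradient u x i) ^ 2
      = ∑ i : Fin n, ∫ x, (fderiv ℝ u x (EuclideanSpace.single i (1 : ℝ))) ^ 2 := by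
    simp_rw [sum_gradient_sq]
    exact integral_finsetSum _ fun i _ => integrable_fderiv_sq hu huc _
  have hε : ∀ ε > 0, ∫ x, u x ^ 2 * V x ≤
      (∫ x, ∑ i, (gradient u x i) ^ 2) + ε * ∫ x, u x ^ 2 * (φ x)⁻¹ := by
    intro ε hε
    obtain ⟨η, hη, H⟩ := hsuper ε hε
    have hlim : Tendsto (fun h : ℝ => (∑ i : Fin n, ∫ x, (h⁻¹ *
        (u (x + h • EuclideanSpace.single i (1 : ℝ)) - u x)) ^ 2) + ε * ∫ x, u x ^ 2 * (φ x)⁻¹)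
        (nhdsWithin 0 (Ioi 0))
        (nhds ((∫ x, ∑ i, (gradient u x i) ^ 2) + ε * ∫ x, u x ^ 2 * (φ x)⁻¹)) := by
      rw [hrhs]
      exact (tendsto_finsetSum _ fun i _ =>
        tendsto_integral_difference_quotient hu huc _).add_const _
    refine ge_of_tendsto hlim ?_
    have hlt : ∀ᶠ h : ℝ in nhdsWithin 0 (Ioi 0), h < η :=
      mem_nhdsWithin_of_mem_nhds (Iio_mem_nhds hη)
    filter_upwards [self_mem_nhdsWithin, hlt] with h hh0 hhη
    have hh0 : 0 < h := hh0
    have hi : ∀ i : Fin n, Integrable fun x => u x ^ 2 * (φ x)⁻¹ * (2 * φ x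
        - φ (x + h • EuclideanSpace.single i (1 : ℝ))
        - φ (x - h • EuclideanSpace.single i (1 : ℝ))) := by
      intro i
      simp_rw [mul_assoc (u _ ^ 2)]
      exact integrable_sq_mul hcont huc fun x hx =>
        (hinv x hx).mul (by fun_prop : Continuous _).continuousAt
    have hpt : ∀ x, h ^ 2 * (u x ^ 2 * V x - ε * (u x ^ 2 * (φ x)⁻¹)) ≤
        ∑ i : Fin n, u x ^ 2 * (φ x)⁻¹ * (2 * φ x
        - φ (x + h • EuclideanSpace.single i (1 : ℝ))
        - φ (x - h • EuclideanSpace.single i (1 : ℝ))) := by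
      intro x
      by_cases hx : x ∈ tsupport u
      · have hp := hφpos x hx
        rw [← Finset.mul_sum]
        refine le_trans (le_of_eq ?_) (mul_le_mul_of_nonneg_left (H h hh0 hhη x hx)
          (by positivity : 0 ≤ u x ^ 2 * (φ x)⁻¹))
        field_simp
      · simp [image_eq_zero_of_notMem_tsupport hx]
    have h1 := integral_mono (((hiV.sub (hiφ.const_mul ε)).const_mul (h ^ 2)))
      (integrable_finsetSum _ fun i _ => hi i) hpt
    rw [integral_finsetSum _ fun i _ => hi i] at h1
    have h2 := h1.trans (Finset.sum_le_sum fun i _ =>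
      integral_picone hcont huc hφ hφ0 hφpos (h • EuclideanSpace.single i (1 : ℝ)))
    have h3 : ∫ x, h ^ 2 * (u x ^ 2 * V x - ε * (u x ^ 2 * (φ x)⁻¹))
        = h ^ 2 * ((∫ x, u x ^ 2 * V x) - ε * ∫ x, u x ^ 2 * (φ x)⁻¹) := by
      rw [integral_const_mul, integral_sub hiV (hiφ.const_mul ε), integral_const_mul]
    simp only [Pi.sub_apply] at h2
    rw [h3] at h2
    simp_rw [mul_pow, integral_const_mul]
    rw [← Finset.mul_sum, inv_pow]
    have h4 : (∫ x, u x ^ 2 * V x) - ε * ∫ x, u x ^ 2 * (φ x)⁻¹ ≤ (h ^ 2)⁻¹ *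
        ∑ i : Fin n, ∫ x, (u (x + h • EuclideanSpace.single i (1 : ℝ)) - u x) ^ 2 := by
      rw [le_inv_mul_iff₀ (by positivity)]
      exact h2
    linarith
  have hlim : Tendsto (fun ε : ℝ => (∫ x, ∑ i, (gradient u x i) ^ 2)
      + ε * ∫ x, u x ^ 2 * (φ x)⁻¹) (nhdsWithin 0 (Ioi 0))
      (nhds ((∫ x, ∑ i, (gradient u x i) ^ 2) + 0 * ∫ x, u x ^ 2 * (φ x)⁻¹)) :=
    ((by fun_prop : Continuous fun ε : ℝ => (∫ x, ∑ i, (gradient u x i) ^ 2)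
      + ε * ∫ x, u x ^ 2 * (φ x)⁻¹).tendsto 0).mono_left nhdsWithin_le_nhds
  rw [zero_mul, add_zero] at hlim
  exact ge_of_tendsto hlim (by filter_upwards [self_mem_nhdsWithin] with ε h using hε ε h)

/-! ### The improved Hardy inequality -/

/-- **Improved Hardy inequality near the boundary** (inequality (5.4) in the Appendix).
Let `Ω ⊂ ℝⁿ`, `n ≥ 2`, be a smooth bounded domain whose boundary is a `C²` hypersurface
(codimension one), and let `d(x) = dist(x, ∂Ω)`.  Then there is `δ₀ > 0` such that for
every `0 < δ ≤ δ₀` and every `u ∈ C₀^∞(Ω_δ)`, where `Ω_δ = {x ∈ Ω : d(x) < δ}`: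
`∫_{Ω_δ} (|∇u|² - u²/(4d²)) ≥ (1/8) ∫_{Ω_δ} (X(d)²/d²) u²`, with `X(t) = (1 - ln t)⁻¹`. -/
theorem improved_hardy_near_boundary
    {n : ℕ} (hn : 2 ≤ n) (Ω : Set (Euc n))
    (hΩo : IsOpen Ω) (hne : Ω.Nonempty) (hconn : IsConnected Ω)
    (hbd : Bornology.IsBounded Ω)
    (hbdry : IsC2Submanifold 1 (frontier Ω)) :
    ∃ δ₀ : ℝ, 0 < δ₀ ∧ ∀ δ : ℝ, 0 < δ → δ ≤ δ₀ →
      ∀ u, IsTest {x ∈ Ω | infDist x (frontier Ω) < δ} u →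
        (1 / 8 : ℝ) * ∫ x in {x ∈ Ω | infDist x (frontier Ω) < δ},
            ((1 - Real.log (infDist x (frontier Ω)))⁻¹) ^ 2
              / (infDist x (frontier Ω)) ^ 2 * (u x) ^ 2
          ≤ ∫ x in {x ∈ Ω | infDist x (frontier Ω) < δ},
              ((∑ i, (gradient u x i) ^ 2)
                - (u x) ^ 2 / (4 * (infDist x (frontier Ω)) ^ 2)) := by
  set S := frontier Ω with hS
  have hSc : IsCompact S :=
    isCompact_of_isClosed_isBounded isClosed_frontier
      (hbd.closure.subset frontier_subset_closure)
  have hSne : S.Nonempty := by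
    have : Nontrivial (Euc n) := by
      have : Nonempty (Fin n) := ⟨⟨0, by omega⟩⟩
      infer_instance
    refine nonempty_frontier_iff.2 ⟨hne, fun h => ?_⟩
    rw [h] at hbd
    exact NormedSpace.unbounded_univ ℝ (Euc n) hbd
  obtain ⟨R, hR, δ₁, hδ₁, htouch⟩ := exists_touching_sphere hbdry hSc hSne
  have hn0 : (0 : ℝ) < n := by exact_mod_cast (by omega : 0 < n)
  obtain ⟨δ₂, hδ₂, hlog⟩ := exists_log_small (ε := R / (4 * n)) (by positivity)
  refine ⟨min (1 / 2) (min δ₁ δ₂), by positivity, ?_⟩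
  intro δ hδ0 hδ u hu
  obtain ⟨hsm, huc, hsupp⟩ := hu
  have hd1 : δ ≤ 1 / 2 := hδ.trans (min_le_left _ _)
  have hd2 : δ ≤ δ₁ := hδ.trans ((min_le_right _ _).trans (min_le_left _ _))
  have hd3 : δ ≤ δ₂ := hδ.trans ((min_le_right _ _).trans (min_le_right _ _))
  have hdcont : Continuous fun x : Euc n => infDist x S := continuous_infDist_pt S
  have hsupp' : ∀ x ∈ tsupport u, 0 < infDist x S ∧ infDist x S < δ := by
    intro x hx
    obtain ⟨hxΩ, hxδ⟩ := hsupp hx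
    refine ⟨(isClosed_frontier.notMem_iff_infDist_pos hSne).1 fun hxS => ?_, hxδ⟩
    have hdis := hΩo.inter_frontier_eq
    exact (Set.ext_iff.1 hdis x).1 ⟨hxΩ, hxS⟩
  have hcp : ∀ x ∈ tsupport u, ContinuousAt (fun x => 1 / (4 * infDist x S ^ 2)) x := by
    intro x hx
    have := (hsupp' x hx).1
    exact continuousAt_const.div (by fun_prop) (by positivity)
  have hcX : ∀ x ∈ tsupport u, ContinuousAt
      (fun x => ((1 - log (infDist x S))⁻¹) ^ 2 / infDist x S ^ 2) x := by
    intro x hx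
    have h0 := (hsupp' x hx).1
    have hL := one_lt_one_sub_log h0 (by linarith [(hsupp' x hx).2])
    have hl : ContinuousAt (fun x => 1 - log (infDist x S)) x :=
      continuousAt_const.sub (hdcont.continuousAt.log h0.ne')
    exact ((hl.inv₀ (by linarith)).pow 2).div (hdcont.continuousAt.pow 2) (by positivity)
  have hcV : ∀ x ∈ tsupport u, ContinuousAt (fun x => potential (infDist x S)) x :=
    fun x hx => (hcp x hx).add (continuousAt_const.mul (hcX x hx))
  have main := hardy_of_discrete_supersolution (φ := fun x => profile (infDist x S))
    (V := fun x => potential (infDist x S)) hsm huc (continuous_profile.comp hdcont)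
    (fun x => profile_nonneg _)
    (fun x hx => profile_pos (hsupp' x hx).1 (by linarith [(hsupp' x hx).2])) hcV
    (fun ε hε => discrete_supersolution hR hd1 (by
        intro t ht0 htδ
        have h := (hlog t ht0 (by linarith)).le
        rw [le_div_iff₀ (by positivity)] at h
        have e : 4 * (n / R) * (t * (1 - log t) ^ 2) = (t * (1 - log t) ^ 2 * (4 * n)) / R := by
          ring
        rw [e, div_le_one hR]
        exact h)
      (fun x h0 h1 => htouch x h0 (by linarith)) huc hsupp' hε)
  have hu0 : ∀ x ∉ {x ∈ Ω | infDist x S < δ}, x ∉ tsupport u := fun x hx h => hx (hsupp h)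
  have hg0 : ∀ x ∉ tsupport u, ∑ i, (gradient u x i) ^ 2 = 0 := by
    intro x hx
    have : fderiv ℝ u x = 0 := by
      by_contra h
      exact hx (support_fderiv_subset ℝ h)
    rw [sum_gradient_sq, this]
    simp
  rw [setIntegral_eq_integral_of_forall_compl_eq_zero (fun x hx => by
      simp [image_eq_zero_of_notMem_tsupport (hu0 x hx)]),
    setIntegral_eq_integral_of_forall_compl_eq_zero (fun x hx => by
      rw [hg0 x (hu0 x hx), image_eq_zero_of_notMem_tsupport (hu0 x hx)]; simp)]
  have hI1 := integrable_sq_mul hsm.continuous huc hcp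
  have hI2 := integrable_sq_mul hsm.continuous huc hcX
  have hIg : Integrable fun x => ∑ i, (gradient u x i) ^ 2 := by
    simp_rw [sum_gradient_sq]
    exact integrable_finsetSum _ fun i _ => integrable_fderiv_sq hsm huc _
  have e1 : ∫ x, u x ^ 2 * potential (infDist x S)
      = (∫ x, u x ^ 2 * (1 / (4 * infDist x S ^ 2)))
        + 1 / 8 * ∫ x, u x ^ 2 * (((1 - log (infDist x S))⁻¹) ^ 2 / infDist x S ^ 2) := by
    rw [← integral_const_mul, ← integral_add hI1 (hI2.const_mul _)]
    congr 1; ext x; unfold potential; ring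
  have e2 : ∫ x, ((∑ i, (gradient u x i) ^ 2) - u x ^ 2 / (4 * infDist x S ^ 2))
      = (∫ x, ∑ i, (gradient u x i) ^ 2) - ∫ x, u x ^ 2 * (1 / (4 * infDist x S ^ 2)) := by
    rw [← integral_sub hIg hI1]
    congr 1; ext x; ring
  have e3 : ∫ x, ((1 - log (infDist x S))⁻¹) ^ 2 / infDist x S ^ 2 * u x ^ 2
      = ∫ x, u x ^ 2 * (((1 - log (infDist x S))⁻¹) ^ 2 / infDist x S ^ 2) := by
    congr 1; ext x; ring
  rw [e2, e3]
  rw [e1] at main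
  linarith
end
end
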